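/- Let F be a field of characteristic zero, τ : F → F a ring homomorphism with fixed field k := F^τ, and ∂ : F → F a derivation with ∂ ∘ τ = τ ∘ ∂. Let x ∈ F be transcendental over k with τ(x) = x + 1 and ∂(x) = 1, and let K := k(x) ⊆ F be the subfield generated by k and x. Let C ⊆ k be an algebraically closed subfield with ∂(c) = 0 for all c ∈ C. Let f ∈ C(x) ⊆ K be a nonzero rational function in x with coefficients in C, and let z ∈ F satisfy τ(z) = z + f. If for every n ≥ 0, every λ₀, …, λₙ ∈ C not all zero, and every g ∈ C(x) one has λ₀f + λ₁∂(f) + ⋯ + λₙ∂ⁿ(f) ≠ τ(g) − g, then z is differentially transcendental over K, i.e. for every n ≥ 0 the elements z, ∂(z), …, ∂ⁿ(z) are algebraically independent over K. -/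

import Mathlib

set_option synthInstance.maxHeartbeats 400000
set_option maxHeartbeats 1000000

/-!
Suppose `τ zᵢ = zᵢ + fᵢ`. The polynomial relations between the `zᵢ` over `K = k(x)` form an ideal
stable under the `τ`-semilinear shift `Xᵢ ↦ Xᵢ + fᵢ`. A monic relation of minimal degree is
invariant under the shift, and differentiating it until it becomes affine gives
`∑ cᵢ fᵢ = τ b - b` with `cᵢ ∈ k` not all zero and `b ∈ k(x)`.

To descend this from `k` to `C`, apply the same minimality argument to the denominators of `b`:
as `x` is shifted by a nonzero constant, no nonconstant polynomial in `x` is invariant, so `b` lies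
in the `k`-span of `C(x)`. Since `k` and `C(x)` are linearly disjoint over `C`, a `C`-linear
functional on `k` extends to a `C(x)`-linear functional on `F`, and this extension commutes with `τ`
on the `k`-span of `C(x)`. Applied to the relation it yields one with coefficients in `C` and
`g ∈ C(x)`. The criterion is the case `zᵢ = ∂ⁱ z`, `fᵢ = ∂ⁱ f`.
-/

section TwistedShift

open MvPolynomial
open scoped MonomialOrder

variable {ι R : Type*} [CommRing R]

/-- The `σ`-semilinear ring endomorphism `Xᵢ ↦ Xᵢ + fᵢ` of the polynomial ring. It describes how
an endomorphism `τ` extending `σ` acts on polynomial expressions in elements `zᵢ` with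
`τ zᵢ = zᵢ + fᵢ`. -/
noncomputable def twistedShift (σ : R →+* R) (f : ι → R) :
    MvPolynomial ι R →+* MvPolynomial ι R :=
  eval₂Hom (C.comp σ) fun i => X i + C (f i)

variable (σ : R →+* R) (f : ι → R)

@[simp]
theorem twistedShift_C (a : R) : twistedShift σ f (C a) = C (σ a) := by
  simp [twistedShift]

@[simp]
theorem twistedShift_X (i : ι) : twistedShift σ f (X i) = X i + C (f i) := by
  simp [twistedShift]

theorem aeval_twistedShift {S : Type*} [CommRing S] [Algebra R S] {σ : R →+* R} {τ : S →+* S}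
    (hστ : ∀ a, τ (algebraMap R S a) = algebraMap R S (σ a)) {f : ι → R} {z : ι → S}
    (hz : ∀ i, τ (z i) = z i + algebraMap R S (f i)) (P : MvPolynomial ι R) :
    aeval z (twistedShift σ f P) = τ (aeval z P) := by
  induction P using MvPolynomial.induction_on with
  | C a => simp [hστ]
  | add p q hp hq => simp [hp, hq]
  | mul_X p i hp => simp [hp, hz]

theorem pderiv_twistedShift (i : ι) (P : MvPolynomial ι R) :
    pderiv i (twistedShift σ f P) = twistedShift σ f (pderiv i P) := by
  classical
  induction P using MvPolynomial.induction_on with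
  | C a => simp
  | add p q hp hq => simp [hp, hq]
  | mul_X p j hp =>
    rcases eq_or_ne j i with rfl | hji
    · simp [hp]
    · simp [hp, pderiv_X_of_ne hji]

theorem coeff_twistedShift_monomial [IsDomain R] (m : MonomialOrder ι) {s t : ι →₀ ℕ}
    (hst : s ≼[m] t) (a : R) :
    coeff t (twistedShift σ f (monomial s a)) = coeff t (monomial s (σ a)) := by
  classical
  set Q : MvPolynomial ι R := s.prod fun i e => (X i + C (f i)) ^ e with hQ
  have shift_eq : twistedShift σ f (monomial s a) = C (σ a) * Q := by
    rw [twistedShift, coe_eval₂Hom, eval₂_monomial, RingHom.comp_apply]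
  have degree_Q : m.degree Q = s := by
    rw [hQ, Finsupp.prod,
      m.degree_prod fun i _ => pow_ne_zero _ (m.monic_X_add_C i (f i)).ne_zero]
    simp only [MonomialOrder.degree_pow, MonomialOrder.degree_X_add_C, Finsupp.smul_single_one]
    exact s.sum_single
  have monic_Q : m.Monic Q := MonomialOrder.Monic.prod fun i _ => (m.monic_X_add_C i (f i)).pow
  rw [shift_eq, coeff_C_mul, coeff_monomial]
  split_ifs with hts
  · rw [← hts, ← degree_Q, monic_Q.coeff_degree, mul_one]
  · rw [m.coeff_eq_zero_of_lt, mul_zero]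
    rw [degree_Q]
    exact hst.lt_of_ne (m.toSyn.injective.ne hts)

theorem coeff_twistedShift_of_degree_le [IsDomain R] (m : MonomialOrder ι)
    {P : MvPolynomial ι R} {t : ι →₀ ℕ} (ht : m.degree P ≼[m] t) :
    coeff t (twistedShift σ f P) = σ (coeff t P) := by
  have support_le : ∀ s ∈ P.support, s ≼[m] t := fun s hs => (m.le_degree hs).trans ht
  calc coeff t (twistedShift σ f P)
      = ∑ s ∈ P.support, coeff t (twistedShift σ f (monomial s (coeff s P))) := by
        conv_lhs => rw [P.as_sum, map_sum, coeff_sum]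
    _ = ∑ s ∈ P.support, σ (coeff t (monomial s (coeff s P))) :=
        Finset.sum_congr rfl fun s hs => by
          classical
          rw [coeff_twistedShift_monomial σ f m (support_le s hs), coeff_monomial, coeff_monomial,
            apply_ite σ, map_zero]
    _ = σ (coeff t P) := by
        conv_rhs => rw [P.as_sum, coeff_sum, map_sum]

theorem degree_twistedShift_sub_self_lt [IsDomain R] (m : MonomialOrder ι)
    {P : MvPolynomial ι R} (hP : m.Monic P) (hne : twistedShift σ f P ≠ P) :
    m.degree (twistedShift σ f P - P) ≺[m] m.degree P := by
  by_contra! hle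
  refine m.coeff_degree_ne_zero_iff.2 (sub_ne_zero.2 hne) ?_
  rw [coeff_sub, coeff_twistedShift_of_degree_le σ f m hle, sub_eq_zero]
  rcases hle.eq_or_lt with heq | hlt
  · rw [← m.toSyn.injective heq, hP.coeff_degree, map_one]
  · rw [m.coeff_eq_zero_of_lt hlt, map_zero]

theorem exists_twistedShift_eq_self_of_ideal_ne_bot {K : Type*} [Field K] [Finite ι] {σ : K →+* K}
    {f : ι → K} {I : Ideal (MvPolynomial ι K)} (hI : I ≠ ⊥)
    (hstable : ∀ P ∈ I, twistedShift σ f P ∈ I) :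
    ∃ P ∈ I, P ≠ 0 ∧ twistedShift σ f P = P := by
  classical
  let : LinearOrder ι := linearOrderOfSTO WellOrderingRel
  let m : MonomialOrder ι := MonomialOrder.lex
  obtain ⟨P, ⟨hPI, hP0⟩, hmin⟩ := WellFounded.has_min
    (InvImage.wf (fun P : MvPolynomial ι K => m.toSyn (m.degree P)) wellFounded_lt)
    {P | P ∈ I ∧ P ≠ 0} (Submodule.exists_mem_ne_zero_of_ne_bot hI)
  have hlead : m.leadingCoeff P ≠ 0 := m.leadingCoeff_ne_zero_iff.2 hP0
  set Q : MvPolynomial ι K := (m.leadingCoeff P)⁻¹ • P with hQ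
  have hQI : Q ∈ I := Submodule.smul_of_tower_mem I _ hPI
  have degree_Q : m.degree Q = m.degree P :=
    m.degree_smul_of_isRegular (IsRegular.of_ne_zero (inv_ne_zero hlead))
  have monic_Q : m.Monic Q := by
    rw [MonomialOrder.Monic, MonomialOrder.leadingCoeff, degree_Q, hQ, coeff_smul, smul_eq_mul]
    exact inv_mul_cancel₀ hlead
  refine ⟨Q, hQI, monic_Q.ne_zero, ?_⟩
  by_contra hne
  refine hmin (twistedShift σ f Q - Q) ⟨sub_mem (hstable Q hQI) hQI, sub_ne_zero.2 hne⟩ ?_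
  change m.degree _ ≺[m] m.degree P
  rw [← degree_Q]
  exact degree_twistedShift_sub_self_lt σ f m monic_Q hne

theorem eq_C_of_forall_pderiv_eq_zero [IsAddTorsionFree R] {P : MvPolynomial ι R}
    (hP : ∀ i, pderiv i P = 0) : P = C (constantCoeff P) := by
  apply MvPolynomial.coe_injective
  refine MvPowerSeries.pderiv.ext (fun i => ?_) ?_
  · rw [MvPowerSeries.pderiv_coe, MvPowerSeries.pderiv_coe, hP, pderiv_C]
  · rw [← MvPowerSeries.coeff_zero_eq_constantCoeff_apply,
      ← MvPowerSeries.coeff_zero_eq_constantCoeff_apply, coeff_coe, coeff_coe, coeff_zero_C,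
      constantCoeff_eq]

theorem totalDegree_pderiv_lt {P : MvPolynomial ι R} (hP : P.totalDegree ≠ 0) (i : ι) :
    (pderiv i P).totalDegree < P.totalDegree := by
  rw [totalDegree, Finset.sup_lt_iff (Nat.pos_of_ne_zero hP)]
  intro s hs
  rw [mem_support_iff, coeff_pderiv] at hs
  have hle := le_totalDegree (mem_support_iff.2 (left_ne_zero_of_mul hs))
  rw [Finsupp.sum_add_index' (fun _ => rfl) fun _ _ _ => rfl, Finsupp.sum_single_index rfl] at hle
  exact hle

theorem exists_eq_linear_of_forall_pderiv_eq_C [Fintype ι] [IsAddTorsionFree R]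
    {P : MvPolynomial ι R} {c : ι → R} (hc : ∀ i, pderiv i P = C (c i)) :
    ∃ b, P = ∑ i, C (c i) * X i + C b := by
  classical
  refine ⟨_, sub_eq_iff_eq_add'.1 (eq_C_of_forall_pderiv_eq_zero fun i => ?_)⟩
  simp [hc, pderiv_X, Pi.single_apply]

theorem exists_sum_mul_eq_sub_of_twistedShift_eq_self [Fintype ι] [IsAddTorsionFree R]
    {σ : R →+* R} {f : ι → R} {P : MvPolynomial ι R} (hfix : twistedShift σ f P = P)
    (hdeg : P.totalDegree ≠ 0) :
    ∃ c : ι → R, c ≠ 0 ∧ (∀ i, σ (c i) = c i) ∧ ∃ b, ∑ i, c i * f i = σ b - b := by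
  induction hd : P.totalDegree using Nat.strong_induction_on generalizing P with
  | _ d ih =>
  have pderiv_fixed (i : ι) : twistedShift σ f (pderiv i P) = pderiv i P := by
    rw [← pderiv_twistedShift, hfix]
  by_cases! hconst : ∃ i, (pderiv i P).totalDegree ≠ 0
  · obtain ⟨i, hi⟩ := hconst
    exact ih _ (hd ▸ totalDegree_pderiv_lt hdeg i) (pderiv_fixed i) hi rfl
  choose c hc using fun i => (⟨_, totalDegree_eq_zero_iff_eq_C.1 (hconst i)⟩ :
    ∃ a, pderiv i P = C a)
  obtain ⟨b, rfl⟩ := exists_eq_linear_of_forall_pderiv_eq_C hc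
  have c_fixed (i : ι) : σ (c i) = c i := by
    have := pderiv_fixed i
    rwa [hc, twistedShift_C, (C_injective _ _).eq_iff] at this
  refine ⟨c, ?_, c_fixed, -b, C_injective ι R ?_⟩
  · rintro rfl
    simp at hdeg
  · simp only [map_add, map_sum, map_mul, twistedShift_C, twistedShift_X, c_fixed, mul_add,
      Finset.sum_add_distrib] at hfix
    simp only [map_sum, map_mul, map_sub, map_neg]
    linear_combination hfix

theorem exists_sum_mul_eq_sub_of_not_algebraicIndependent {K S : Type*} [Field K] [CharZero K]
    [CommRing S] [Nontrivial S] [Algebra K S] [Fintype ι] {σ : K →+* K} {τ : S →+* S}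
    (hστ : ∀ a, τ (algebraMap K S a) = algebraMap K S (σ a)) {f : ι → K} {z : ι → S}
    (hz : ∀ i, τ (z i) = z i + algebraMap K S (f i)) (hdep : ¬ AlgebraicIndependent K z) :
    ∃ c : ι → K, c ≠ 0 ∧ (∀ i, σ (c i) = c i) ∧ ∃ b, ∑ i, c i * f i = σ b - b := by
  have ker_ne_bot : RingHom.ker (aeval (R := K) z) ≠ ⊥ := fun h =>
    hdep ((RingHom.injective_iff_ker_eq_bot _).2 h)
  obtain ⟨P, hPz, hP0, hfix⟩ := exists_twistedShift_eq_self_of_ideal_ne_bot (σ := σ) (f := f)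
    ker_ne_bot fun P hP => by
      rw [RingHom.mem_ker] at hP ⊢
      rw [aeval_twistedShift hστ hz, hP, map_zero]
  refine exists_sum_mul_eq_sub_of_twistedShift_eq_self hfix fun hdeg => hP0 ?_
  rw [totalDegree_eq_zero_iff_eq_C] at hdeg
  rw [RingHom.mem_ker, hdeg, aeval_C, map_eq_zero_iff _ (algebraMap K S).injective] at hPz
  rw [hdeg, hPz, map_zero]

end TwistedShift

section Denominators

open MvPolynomial IntermediateField

variable {k F : Type*} [Field k] [Field F] [Algebra k F]

/-- The ideal of denominators of `g` with respect to a subalgebra `M`: the multipliers that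
carry `g` into `M`. -/
def denominatorIdeal (M : Subalgebra k F) (g : F) : Ideal M where
  carrier := {a | (a : F) * g ∈ M}
  zero_mem' := by simp
  add_mem' ha hb := by simpa [add_mul] using add_mem ha hb
  smul_mem' a b hb := by simpa [mul_assoc] using mul_mem a.2 hb

theorem mem_denominatorIdeal {M : Subalgebra k F} {g : F} {a : M} :
    a ∈ denominatorIdeal M g ↔ (a : F) * g ∈ M :=
  Iff.rfl

theorem apply_mul_mem_of_mul_mem {M : Subalgebra k F} {τ : F →+* F} (hτM : ∀ a ∈ M, τ a ∈ M)
    {g : F} (hsub : τ g - g ∈ M) {a : F} (ha : a ∈ M) (hag : a * g ∈ M) : τ a * g ∈ M := by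
  have key : τ a * g = τ (a * g) - τ a * (τ g - g) := by
    rw [map_mul]
    ring
  rw [key]
  exact sub_mem (hτM _ hag) (mul_mem (hτM a ha) hsub)

theorem comap_aeval_denominatorIdeal_ne_bot {ι : Type*} {M : Subalgebra k F} (z : ι → M) {g : F}
    (hg : g ∈ adjoin k (Set.range fun i => (z i : F))) :
    (denominatorIdeal M g).comap (aeval (R := k) z) ≠ ⊥ := by
  obtain ⟨r, s, rfl⟩ := (mem_adjoin_range_iff k _ g).1 hg
  have coe_aeval (P : MvPolynomial ι k) : (aeval z P : F) = aeval (fun i => (z i : F)) P :=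
    comp_aeval_apply z M.val P
  rw [Submodule.ne_bot_iff]
  by_cases hs : aeval (fun i => (z i : F)) s = 0
  · exact ⟨1, by simp [mem_denominatorIdeal, hs], one_ne_zero⟩
  · refine ⟨s, ?_, fun h => hs (by rw [h, map_zero])⟩
    rw [Ideal.mem_comap, mem_denominatorIdeal, coe_aeval, mul_div_cancel₀ _ hs, ← coe_aeval]
    exact (aeval z r).2

theorem mem_of_apply_sub_mem_of_mem_adjoin [CharZero k] {M : Subalgebra k F} {τ : F →ₐ[k] F}
    (hτM : ∀ a ∈ M, τ a ∈ M) {x : F} (hxM : x ∈ M) {h : k} (hh : h ≠ 0)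
    (hτx : τ x = x + algebraMap k F h) {g : F} (hg : g ∈ k⟮x⟯) (hsub : τ g - g ∈ M) : g ∈ M := by
  let x' : Unit → M := fun _ => ⟨x, hxM⟩
  let τM : M →ₐ[k] M := (τ.comp M.val).codRestrict M fun a => hτM a a.2
  let J := (denominatorIdeal M g).comap (aeval (R := k) x')
  have J_ne_bot : J ≠ ⊥ := comap_aeval_denominatorIdeal_ne_bot x' (by rwa [Set.range_const])
  have J_stable (P) (hP : P ∈ J) : twistedShift (.id k) (fun _ => h) P ∈ J := by
    have aeval_shift : aeval x' (twistedShift (.id k) (fun _ => h) P) = τM (aeval x' P) :=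
      aeval_twistedShift (σ := .id k) (τ := (τM : M →+* M)) (z := x') τM.commutes
        (fun _ => Subtype.ext hτx) P
    rw [Ideal.mem_comap, aeval_shift]
    exact apply_mul_mem_of_mul_mem (τ := (τ : F →+* F)) hτM hsub (aeval x' P).2 hP
  obtain ⟨P, hPJ, hP0, hfix⟩ := exists_twistedShift_eq_self_of_ideal_ne_bot J_ne_bot J_stable
  have degree_P : P.totalDegree = 0 := by
    by_contra hdeg
    obtain ⟨c, hc0, -, b, hb⟩ := exists_sum_mul_eq_sub_of_twistedShift_eq_self hfix hdeg
    exact hc0 (funext fun i => by simpa [hh] using hb)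
  obtain ⟨a, rfl⟩ : ∃ a, P = C a := ⟨_, totalDegree_eq_zero_iff_eq_C.1 degree_P⟩
  have ha : a ≠ 0 := by
    rintro rfl
    exact hP0 C_0
  have hag : a • g ∈ M := by
    rwa [Ideal.mem_comap, aeval_C, mem_denominatorIdeal, Subalgebra.coe_algebraMap,
      ← Algebra.smul_def] at hPJ
  simpa [ha] using M.smul_mem hag a⁻¹

theorem toSubmodule_adjoin_submonoid {R A : Type*} [CommSemiring R] [Semiring A] [Algebra R A]
    (S : Submonoid A) :
    Subalgebra.toSubmodule (Algebra.adjoin R (S : Set A)) = Submodule.span R S := by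
  rw [Algebra.adjoin_eq_span, S.closure_eq]

theorem mem_span_of_apply_sub_mem [CharZero k] {A : Subfield F} {τ : F →ₐ[k] F}
    (hτA : ∀ a ∈ A, τ a ∈ A) {x : F} (hxA : x ∈ A) {h : k} (hh : h ≠ 0)
    (hτx : τ x = x + algebraMap k F h) {b : F} (hb : b ∈ k⟮x⟯)
    (hsub : τ b - b ∈ Submodule.span k (A : Set F)) : b ∈ Submodule.span k (A : Set F) := by
  let M := Algebra.adjoin k (A : Set F)
  have hM : Subalgebra.toSubmodule M = Submodule.span k (A : Set F) :=
    toSubmodule_adjoin_submonoid A.toSubmonoid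
  have hτM : M ≤ M.comap τ := Algebra.adjoin_le fun a ha => Algebra.subset_adjoin (hτA a ha)
  rw [← hM] at hsub ⊢
  exact mem_of_apply_sub_mem_of_mem_adjoin hτM (Algebra.subset_adjoin hxA) hh hτx hb hsub

end Denominators

section LinearDisjoint

open MvPolynomial IntermediateField

variable {C k F : Type*} [Field C] [Field k] [Field F] [Algebra C k] [Algebra k F] [Algebra C F]

theorem map_smul_coe_of_extends {A : IntermediateField C F} {φ : k →ₗ[C] C}
    {Φ : F →ₗ[A] A} (hΦ : ∀ a, Φ (algebraMap k F a) = algebraMap C A (φ a)) (c : k) (a : A) :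
    Φ (c • (a : F)) = φ c • a := by
  calc Φ (c • (a : F)) = Φ (a • algebraMap k F c) := by
        rw [Algebra.smul_def, mul_comm, IntermediateField.smul_def, smul_eq_mul]
    _ = φ c • a := by
        rw [map_smul, hΦ, smul_eq_mul, mul_comm, Algebra.smul_def]

variable [IsScalarTower C k F]

open scoped IntermediateField.algebraAdjoinAdjoin in
theorem linearDisjoint_adjoin_range_of_algebraicIndependent {ι : Type*} {x : ι → F}
    (hx : AlgebraicIndependent k x) : (adjoin C (Set.range x)).LinearDisjoint k := by
  let b := Module.Basis.ofVectorSpace C k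
  refine .of_basis_right' b ((LinearIndependent.iff_fractionRing
    (Algebra.adjoin C (Set.range x)) (adjoin C (Set.range x))).1 ?_)
  rw [linearIndependent_iff']
  intro s g hg
  have exists_aeval_eq (j) : ∃ p : MvPolynomial ι C, aeval x p = (g j : F) := by
    simpa only [Algebra.adjoin_range_eq_range_aeval, AlgHom.mem_range] using (g j).2
  choose p hp using exists_aeval_eq
  have sum_eq_zero : ∑ j ∈ s, MvPolynomial.C (b j) * map (algebraMap C k) (p j) = 0 := by
    refine hx.eq_zero_of_aeval_eq_zero _ ?_
    simpa [aeval_map_algebraMap, hp, Subalgebra.smul_def, mul_comm] using hg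
  have p_eq_zero (j) (hj : j ∈ s) : p j = 0 := by
    ext m
    refine linearIndependent_iff'.1 b.linearIndependent s (fun j => coeff m (p j)) ?_ j hj
    simpa [coeff_sum, coeff_C_mul, coeff_map, Algebra.smul_def, mul_comm (b _)] using
      congrArg (coeff m) sum_eq_zero
  intro j hj
  rw [← ZeroMemClass.coe_eq_zero, ← hp, p_eq_zero j hj, map_zero]

theorem exists_linearMap_extending_of_linearDisjoint {A : IntermediateField C F}
    (hA : A.LinearDisjoint k) (φ : k →ₗ[C] C) :
    ∃ Φ : F →ₗ[A] A, ∀ a, Φ (algebraMap k F a) = algebraMap C A (φ a) := by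
  let b := Module.Basis.ofVectorSpace C k
  let b' := Module.Basis.span (hA.linearIndependent_right' b.linearIndependent)
  obtain ⟨Φ, hΦ⟩ := (b'.constr A fun j => algebraMap C A (φ (b j))).exists_extend
  have Φ_basis (j) : Φ (algebraMap k F (b j)) = algebraMap C A (φ (b j)) := by
    have := LinearMap.congr_fun hΦ (b' j)
    rwa [b'.constr_basis, LinearMap.comp_apply, Submodule.subtype_apply,
      Module.Basis.span_apply] at this
  have Φ_eq : Φ.restrictScalars C ∘ₗ (Algebra.linearMap k F).restrictScalars C =
      Algebra.linearMap C A ∘ₗ φ := b.ext Φ_basis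
  exact ⟨Φ, LinearMap.congr_fun Φ_eq⟩

theorem coe_apply_comm_of_mem_span {A : IntermediateField C F} {τ : F →ₐ[k] F}
    (hτA : ∀ a ∈ A, τ a ∈ A) {φ : k →ₗ[C] C}
    {Φ : F →ₗ[A] A} (hΦ : ∀ a, Φ (algebraMap k F a) = algebraMap C A (φ a))
    {b : F} (hb : b ∈ Submodule.span k (A : Set F)) : (Φ (τ b) : F) = τ (Φ b) := by
  induction hb using Submodule.closure_induction with
  | zero => simp
  | add u v _ _ hu hv => simp only [map_add, IntermediateField.coe_add, hu, hv]
  | smul_mem c a ha =>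
    lift a to A using ha
    lift τ a to A using hτA a a.2 with a' ha'
    rw [map_smul, ← ha', map_smul_coe_of_extends hΦ, map_smul_coe_of_extends hΦ,
      IntermediateField.coe_smul, IntermediateField.coe_smul, ha',
      ← algebraMap_smul k (φ c) (a : F), map_smul, algebraMap_smul]

end LinearDisjoint

section Criterion

open IntermediateField

theorem apply_mem_adjoin_simple {K L : Type*} [Field K] [Field L] [Algebra K L] {τ : L →ₐ[K] L}
    {x : L} (hx : τ x ∈ K⟮x⟯) {a : L} (ha : a ∈ K⟮x⟯) : τ a ∈ K⟮x⟯ :=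
  (adjoin_simple_le_iff (K := K⟮x⟯.comap τ)).2 hx ha

variable {C k F : Type*} [Field C] [Field k] [Field F] [Algebra C k] [Algebra k F] [Algebra C F]
  [IsScalarTower C k F]

theorem exists_sum_smul_eq_sub_of_transcendental [CharZero k] {ι : Type*} [Fintype ι]
    {τ : F →ₐ[k] F} {x : F} (hx : Transcendental k x) {h : C} (hh : h ≠ 0)
    (hτx : τ x = x + algebraMap C F h) {f : ι → F} (hf : ∀ i, f i ∈ C⟮x⟯) {c : ι → k} (hc : c ≠ 0)
    {b : F} (hb : b ∈ k⟮x⟯) (hsum : ∑ i, c i • f i = τ b - b) :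
    ∃ l : ι → C, l ≠ 0 ∧ ∃ g ∈ C⟮x⟯, ∑ i, l i • f i = τ g - g := by
  have hτ (a) (ha : a ∈ C⟮x⟯) : τ a ∈ C⟮x⟯ := by
    refine apply_mem_adjoin_simple (τ := τ.restrictScalars C) ?_ ha
    exact hτx ▸ add_mem (mem_adjoin_simple_self C x) (C⟮x⟯.algebraMap_mem h)
  have b_mem : b ∈ Submodule.span k (C⟮x⟯ : Set F) := by
    rw [IsScalarTower.algebraMap_apply C k F] at hτx
    refine mem_span_of_apply_sub_mem hτ (mem_adjoin_simple_self C x) (by simpa using hh) hτx hb ?_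
    rw [← hsum]
    exact sum_mem fun i _ => Submodule.smul_mem _ _ (Submodule.subset_span (hf i))
  have disj : C⟮x⟯.LinearDisjoint k := by
    simpa using linearDisjoint_adjoin_range_of_algebraicIndependent (C := C)
      (algebraicIndependent_iff_transcendental.2 hx)
  obtain ⟨i₀, hi₀⟩ := Function.ne_iff.1 hc
  obtain ⟨φ, hφ⟩ : ∃ φ : k →ₗ[C] C, φ (c i₀) ≠ 0 := by
    by_contra! hφ
    exact hi₀ ((Module.forall_dual_apply_eq_zero_iff C _).1 hφ)
  obtain ⟨Φ, hΦ⟩ := exists_linearMap_extending_of_linearDisjoint disj φ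
  refine ⟨fun i => φ (c i), fun h => hφ (congrFun h i₀), Φ b, (Φ b).2, ?_⟩
  calc ∑ i, φ (c i) • f i = Φ (∑ i, c i • f i) := by
        simp [map_sum, map_smul_coe_of_extends hΦ _ (⟨f _, hf _⟩ : C⟮x⟯)]
    _ = τ (Φ b) - Φ b := by
        rw [hsum, map_sub, AddSubgroupClass.coe_sub, coe_apply_comm_of_mem_span hτ hΦ b_mem]

theorem algebraicIndependent_of_forall_sum_smul_ne_sub [CharZero k] {ι : Type*} [Fintype ι]
    {τ : F →ₐ[k] F} (hfix : ∀ a, τ a = a → a ∈ (algebraMap k F).range) {x : F}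
    (hx : Transcendental k x) {h : C} (hh : h ≠ 0) (hτx : τ x = x + algebraMap C F h)
    {f : ι → F} (hf : ∀ i, f i ∈ C⟮x⟯) {z : ι → F} (hz : ∀ i, τ (z i) = z i + f i)
    (H : ∀ l : ι → C, l ≠ 0 → ∀ g ∈ C⟮x⟯, ∑ i, l i • f i ≠ τ g - g) :
    AlgebraicIndependent k⟮x⟯ z := by
  have hle (a : F) (ha : a ∈ C⟮x⟯) : a ∈ k⟮x⟯ :=
    (adjoin_simple_le_iff (K := k⟮x⟯.restrictScalars C)).2 (mem_adjoin_simple_self k x) ha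
  have hτ (a : k⟮x⟯) : τ a ∈ k⟮x⟯ := by
    refine apply_mem_adjoin_simple ?_ a.2
    rw [hτx, IsScalarTower.algebraMap_apply C k F]
    exact add_mem (mem_adjoin_simple_self k x) (k⟮x⟯.algebraMap_mem _)
  let σ : k⟮x⟯ →+* k⟮x⟯ := ((τ : F →+* F).comp (algebraMap k⟮x⟯ F)).codRestrict k⟮x⟯ hτ
  by_contra hdep
  obtain ⟨c, hc0, c_fixed, b, hb⟩ := exists_sum_mul_eq_sub_of_not_algebraicIndependent (σ := σ)
    (τ := (τ : F →+* F)) (fun _ => rfl) (f := fun i => ⟨f i, hle _ (hf i)⟩) hz hdep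
  choose c' hc' using fun i => hfix (c i) (congrArg Subtype.val (c_fixed i))
  have hc'0 : c' ≠ 0 := by
    rintro rfl
    exact hc0 (funext fun i => Subtype.ext (by simp [← hc']))
  have hsum : ∑ i, c' i • f i = τ b - b := by
    have coe_σ : (σ b : F) = τ b := rfl
    simpa [Algebra.smul_def, hc', coe_σ] using congrArg (algebraMap k⟮x⟯ F) hb
  obtain ⟨l, hl0, g, hg, hlg⟩ :=
    exists_sum_smul_eq_sub_of_transcendental hx hh hτx hf hc'0 b.2 hsum
  exact H l hl0 g hg hlg

theorem mapsTo_closure_of_derivation {R L : Type*} [CommRing R] [Field L] [Algebra R L]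
    (D : Derivation R L L) {s : Set L} (hs : ∀ a ∈ s, D a ∈ Subfield.closure s) :
    Set.MapsTo D (Subfield.closure s) (Subfield.closure s) := by
  intro a ha
  induction ha using Subfield.closure_induction with
  | mem a ha => exact hs a ha
  | one => simp
  | add a b _ _ hDa hDb => simpa using add_mem hDa hDb
  | neg a _ hDa => simpa using neg_mem hDa
  | inv a ha hDa =>
    rw [D.leibniz_inv]
    exact mul_mem (neg_mem (pow_mem (inv_mem ha) 2)) hDa
  | mul a b ha hb hDa hDb =>
    rw [D.leibniz]
    exact add_mem (mul_mem ha hDb) (mul_mem hb hDa)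

theorem toSubfield_adjoin_subfield {L : Type*} [Field L] (E : Subfield L) (s : Set L) :
    (adjoin E s).toSubfield = Subfield.closure (E ∪ s) := by
  rw [adjoin_toSubfield]
  exact congrArg (fun t => Subfield.closure (t ∪ s)) Subtype.range_coe

end Criterion

theorem differential_transcendence_criterion_finite_difference_general
    {F : Type*} [Field F] [CharZero F] (τ : F →+* F)
    (k : Subfield F) (hk : ∀ a, a ∈ k ↔ τ a = a)
    (D : Derivation ℤ F F) (hDτ : ∀ a, D (τ a) = τ (D a))
    (C : Subfield F) (hCk : C ≤ k)
    {x h : F} (hx : Transcendental k x) (hhC : h ∈ C) (hh : h ≠ 0) (hτx : τ x = x + h)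
    (hDC : ∀ c ∈ C, D c ∈ Subfield.closure ((C : Set F) ∪ {x}))
    (hDx : D x ∈ Subfield.closure ((C : Set F) ∪ {x}))
    {f z : F} (hf : f ∈ Subfield.closure ((C : Set F) ∪ {x})) (hz : τ z = z + f)
    (H : ∀ (n : ℕ) (l : Fin (n + 1) → F), (∀ i, l i ∈ C) → (∃ i, l i ≠ 0) →
      ∀ g ∈ Subfield.closure ((C : Set F) ∪ {x}), ∑ i, l i * D^[i] f ≠ τ g - g) (n : ℕ) :
    AlgebraicIndependent (Subfield.closure ((k : Set F) ∪ {x}))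
      fun i : Fin (n + 1) => D^[i] z := by
  let : Algebra C k := (Subfield.inclusion hCk).toAlgebra
  have : IsScalarTower C k F := .of_algebraMap_eq fun _ => rfl
  let τk : F →ₐ[k] F := { τ with commutes' := fun a => (hk a).1 a.2 }
  have D_mapsTo := mapsTo_closure_of_derivation D (s := C ∪ {x}) fun a ha =>
    ha.elim (hDC a) fun ha => ha ▸ hDx
  have shift_iterate (i : ℕ) : τ (D^[i] z) = D^[i] z + D^[i] f := by
    have hcomm : Function.Commute D τ := hDτ
    rw [← (hcomm.iterate_left i).eq, hz, iterate_map_add]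
  rw [← toSubfield_adjoin_subfield] at D_mapsTo hf ⊢
  simp only [← toSubfield_adjoin_subfield] at H
  refine algebraicIndependent_of_forall_sum_smul_ne_sub (C := C) (k := k) (τ := τk)
    (f := fun i : Fin (n + 1) => D^[i] f) (h := ⟨h, hhC⟩)
    (fun a ha => ⟨⟨a, (hk a).2 ha⟩, rfl⟩) hx (fun h0 => hh (congrArg Subtype.val h0)) hτx
    (fun i => D_mapsTo.iterate i hf) (fun i => shift_iterate i) fun l hl g hg => ?_
  exact H n (fun i => l i) (fun i => (l i).2) (by simpa [Function.ne_iff] using hl) g hg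

/-- Criterion for differential transcendence of solutions of `τ(z) = z + f`, `f ∈ C(x)`,
over `K = k(x)`, where `τ(x) = x + 1`: if no nonzero `C`-linear combination of the
derivatives of `f` is of the form `τ(g) - g` with `g ∈ C(x)`, then `z` is differentially
transcendental over `K`. -/
theorem differential_transcendence_criterion_finite_difference
    (F : Type*) [Field F] [CharZero F] (τ : F →+* F)
    (k : Subfield F) (hk : ∀ a : F, a ∈ k ↔ τ a = a)
    (del : F → F)
    (hdeladd : ∀ a b : F, del (a + b) = del a + del b)
    (hdelmul : ∀ a b : F, del (a * b) = a * del b + del a * b)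
    (hdelτ : ∀ a : F, del (τ a) = τ (del a))
    (x : F) (hxtr : Transcendental k x) (hτx : τ x = x + 1) (hdelx : del x = 1)
    (K : Subfield F) (hK : K = Subfield.closure ((k : Set F) ∪ {x}))
    (C : Subfield F) (hCk : (C : Set F) ⊆ (k : Set F)) [IsAlgClosed C]
    (hdelC : ∀ c ∈ C, del c = 0)
    (Cx : Subfield F) (hCx : Cx = Subfield.closure ((C : Set F) ∪ {x}))
    (f : F) (hf : f ∈ Cx) (hf0 : f ≠ 0)
    (z : F) (hz : τ z = z + f)
    (H : ∀ (n : ℕ) (lam : Fin (n + 1) → F), (∀ i, lam i ∈ C) → (∃ i, lam i ≠ 0) →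
      ∀ g ∈ Cx, ∑ i : Fin (n + 1), lam i * del^[(i : ℕ)] f ≠ τ g - g) :
    ∀ n : ℕ, AlgebraicIndependent K (fun i : Fin (n + 1) => del^[(i : ℕ)] z) := by
  subst hK hCx
  let D : Derivation ℤ F F := .mk' (AddMonoidHom.mk' del hdeladd).toIntLinearMap fun a b => by
    simp [hdelmul, mul_comm]
  exact differential_transcendence_criterion_finite_difference_general τ k hk D hdelτ C hCk
    hxtr C.one_mem one_ne_zero hτx (fun c hc => by simp [D, hdelC c hc]) (by simp [D, hdelx])
    hf hz H
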